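/- arXiv:1802.01941 — 4 statements merged into one kernel-verified Lean document; each statement's English description precedes it below -/
import Mathlib

section
/- Let F be a field of characteristic different from 2, let d ∈ F× be a non-square, and let E = F(√d) be the corresponding quadratic field extension, with norm map N_{E/F}. Let ε ∈ F× be an element that is not a norm from E×, and assume every element of F× lies in N_{E/F}(E×) ∪ ε·N_{E/F}(E×). Let B(E) ⊆ SL₂(E) be the subgroup of upper triangular matrices, and set η₁ = [[1,0],[√d,1]] and η₂ = [[1,0],[ε√d,1]] in SL₂(E). Then SL₂(E) is the disjoint union of the three double cosets B(E)·SL₂(F), B(E)·η₁·SL₂(F) and B(E)·η₂·SL₂(F); that is, every g ∈ SL₂(E) can be written as b·η·h with b ∈ B(E), h ∈ SL₂(F) and η ∈ {1, η₁, η₂}, and for distinct choices of η these double cosets are pairwise disjoint. -/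
open Matrix

/-- The double coset `B(E) · η · SL₂(F)` inside `SL₂(E)`, where `B(E)` is the Borel subgroup
of upper triangular matrices and `SL₂(F)` is embedded in `SL₂(E)` via `algebraMap F E`. -/
def doubleCoset (F : Type*) {E : Type*} [Field F] [Field E] [Algebra F E]
    (η : SpecialLinearGroup (Fin 2) E) : Set (SpecialLinearGroup (Fin 2) E) :=
  {g | ∃ (b : SpecialLinearGroup (Fin 2) E) (h₀ : SpecialLinearGroup (Fin 2) F),
      (b : Matrix (Fin 2) (Fin 2) E) 1 0 = 0 ∧
      g = b * η * SpecialLinearGroup.map (algebraMap F E) h₀}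

/-!
Left multiplication by `B(E)` rescales the bottom row `v` of `g ∈ SL₂(E)` and right multiplication
by `SL₂(F)` moves it by an `F`-rational matrix of determinant one, so double cosets are orbits of
nonzero rows. The determinant `v₀ σ(v₁) - v₁ σ(v₀)` of the rows `v`, `σ v` is `SL₂(F)`-invariant and
is scaled by `t σ(t)` when `v` is scaled by `t`. Writing `v = (θ, 1) V` with `V` rational turns it
into `det V · (θ - σ θ)`; hence rows with equal nonzero invariant differ by the rational matrix
`W⁻¹ V` of determinant one, while rows with invariant zero are multiples of rational rows. So the
invariant modulo norms classifies the double cosets, and on `1`, `η₁`, `η₂` it is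
`0`, `θ - σ θ` and `ε (θ - σ θ)`.
-/

section ConjDet

variable {F E : Type*} [CommRing F] [CommRing E] [Algebra F E] (σ : E →ₐ[F] E)

/-- The determinant of the `2 × 2` matrix with rows `v` and `σ v`. For a quadratic extension with
conjugation `σ`, applied to the bottom row of `g ∈ SL₂(E)`, its class modulo norms is the invariant
of the double coset `B(E) · g · SL₂(F)`. -/
def conjDet (v : Fin 2 → E) : E :=
  v 0 * σ (v 1) - v 1 * σ (v 0)

theorem conjDet_smul (t : E) (v : Fin 2 → E) :
    conjDet σ (t • v) = t * σ t * conjDet σ v := by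
  simp only [conjDet, Pi.smul_apply, smul_eq_mul, map_mul]
  ring

theorem conjDet_vecMul_map (v : Fin 2 → E) (A : Matrix (Fin 2) (Fin 2) F) :
    conjDet σ (v ᵥ* A.map (algebraMap F E)) = algebraMap F E A.det * conjDet σ v := by
  simp only [conjDet, vecMul_eq_sum, Fin.sum_univ_two, Pi.add_apply, Pi.smul_apply, map_apply,
    smul_eq_mul, map_add, map_sub, map_mul, AlgHom.commutes, det_fin_two]
  ring

variable {σ} {θ : E}

theorem conjDet_theta_one_vecMul_map (V : Matrix (Fin 2) (Fin 2) F) :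
    conjDet σ (![θ, 1] ᵥ* V.map (algebraMap F E)) = algebraMap F E V.det * (θ - σ θ) := by
  rw [conjDet_vecMul_map]
  simp [conjDet]

theorem conjDet_row_of_eq_lower {η : SpecialLinearGroup (Fin 2) E} {a : F}
    (hη : (η : Matrix (Fin 2) (Fin 2) E) = !![1, 0; algebraMap F E a * θ, 1]) :
    conjDet σ (η 1) = algebraMap F E a * (θ - σ θ) := by
  simp [conjDet, hη, mul_sub]

theorem exists_eq_vecMul_map
    (hspan : ∀ x : E, ∃ a b : F, x = algebraMap F E a + algebraMap F E b * θ) (v : Fin 2 → E) :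
    ∃ V : Matrix (Fin 2) (Fin 2) F, v = ![θ, 1] ᵥ* V.map (algebraMap F E) := by
  choose a b hab using hspan
  refine ⟨of ![fun j => b (v j), fun j => a (v j)], funext fun j => (hab (v j)).trans ?_⟩
  simp only [vecMul_eq_sum, Fin.sum_univ_two, Pi.add_apply, Pi.smul_apply, map_apply, of_apply,
    cons_val_zero, cons_val_one, smul_eq_mul, one_mul]
  ring

theorem exists_algebraMap_eq_of_map_eq_self [NoZeroDivisors E] (hθ : σ θ ≠ θ)
    (hspan : ∀ x : E, ∃ a b : F, x = algebraMap F E a + algebraMap F E b * θ)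
    {x : E} (hx : σ x = x) : ∃ a : F, algebraMap F E a = x := by
  obtain ⟨a, b, rfl⟩ := hspan x
  have hb : algebraMap F E b * (σ θ - θ) = 0 := by
    simp only [map_add, map_mul, AlgHom.commutes] at hx
    linear_combination hx
  exact ⟨a, by rw [(mul_eq_zero.mp hb).resolve_right (sub_ne_zero.mpr hθ), zero_mul, add_zero]⟩

end ConjDet

section Row

theorem mul_row_eq_vecMul {n R : Type*} [Fintype n] [DecidableEq n] [CommRing R]
    (A B : SpecialLinearGroup n R) (i : n) :
    (A * B) i = A i ᵥ* (B : Matrix n n R) :=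
  mul_apply_eq_vecMul _ _ _

variable {F E : Type*} [Field F] [Field E] [Algebra F E] {g η : SpecialLinearGroup (Fin 2) E}

theorem mul_map_row_eq_vecMul (h : SpecialLinearGroup (Fin 2) F) (i : Fin 2) :
    (η * SpecialLinearGroup.map (algebraMap F E) h) i =
      η i ᵥ* (h : Matrix (Fin 2) (Fin 2) F).map (algebraMap F E) :=
  mul_row_eq_vecMul _ _ _

theorem mem_doubleCoset_iff_exists_row_eq :
    g ∈ doubleCoset F η ↔ ∃ (t : E) (h : SpecialLinearGroup (Fin 2) F), t ≠ 0 ∧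
      g 1 = t • (η 1 ᵥ* (h : Matrix (Fin 2) (Fin 2) F).map (algebraMap F E)) := by
  simp only [← mul_map_row_eq_vecMul]
  constructor
  · rintro ⟨b, h, hb, rfl⟩
    have hdet : b 0 0 * b 1 1 = 1 := by
      have hb_det := b.det_coe
      rwa [det_fin_two, hb, mul_zero, sub_zero] at hb_det
    refine ⟨b 1 1, h, right_ne_zero_of_mul_eq_one hdet, ?_⟩
    rw [mul_assoc, mul_row_eq_vecMul]
    ext j
    simp [vecMul_eq_sum, Fin.sum_univ_two, hb]
  · rintro ⟨t, h, -, hrow⟩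
    set k := η * SpecialLinearGroup.map (algebraMap F E) h with hk
    have hb : (g * k⁻¹) 1 = t • (1 : SpecialLinearGroup (Fin 2) E) 1 := by
      rw [mul_row_eq_vecMul, hrow, smul_vecMul, ← mul_row_eq_vecMul, mul_inv_cancel]
    exact ⟨g * k⁻¹, h, by simp [hb], by rw [mul_assoc, ← hk, inv_mul_cancel_right]⟩

theorem exists_conjDet_eq_of_mem_doubleCoset (σ : E →ₐ[F] E) (hg : g ∈ doubleCoset F η) :
    ∃ t : E, t ≠ 0 ∧ conjDet σ (g 1) = t * σ t * conjDet σ (η 1) := by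
  obtain ⟨t, h, ht, hrow⟩ := mem_doubleCoset_iff_exists_row_eq.mp hg
  exact ⟨t, ht, by rw [hrow, conjDet_smul, conjDet_vecMul_map, h.det_coe, map_one, one_mul]⟩

theorem doubleCoset_inter_eq_empty (σ : E →ₐ[F] E) {η' : SpecialLinearGroup (Fin 2) E}
    (h : ∀ x : E, conjDet σ (η' 1) ≠ x * σ x * conjDet σ (η 1)) :
    doubleCoset F η ∩ doubleCoset F η' = ∅ := by
  refine Set.eq_empty_iff_forall_notMem.mpr fun g ⟨hg, hg'⟩ => ?_
  obtain ⟨t, -, ht⟩ := exists_conjDet_eq_of_mem_doubleCoset σ hg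
  obtain ⟨u, hu, hu'⟩ := exists_conjDet_eq_of_mem_doubleCoset σ hg'
  have hσu : σ u ≠ 0 := (map_ne_zero σ).mpr hu
  apply h (t / u)
  rw [map_div₀]
  field_simp
  linear_combination hu'.symm.trans ht

end Row

section Quadratic

variable {F E : Type*} [Field F] [Field E] [Algebra F E] {σ : E →ₐ[F] E} {θ : E}

theorem exists_eq_smul_map_row_of_conjDet_eq_zero (hθ : σ θ ≠ θ)
    (hspan : ∀ x : E, ∃ a b : F, x = algebraMap F E a + algebraMap F E b * θ)
    {v : Fin 2 → E} (hv : v ≠ 0) (hdet : conjDet σ v = 0) :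
    ∃ (t : E) (h : SpecialLinearGroup (Fin 2) F), t ≠ 0 ∧
      v = t • (h : Matrix (Fin 2) (Fin 2) F).map (algebraMap F E) 1 := by
  by_cases hv1 : v 1 = 0
  · refine ⟨v 0, ⟨!![0, -1; 1, 0], by simp⟩, fun hv0 => hv ?_, ?_⟩ <;>
      ext j <;> fin_cases j <;> simp [*]
  · have hfixed : σ (v 0 / v 1) = v 0 / v 1 := by
      have hσv1 : σ (v 1) ≠ 0 := (map_ne_zero σ).mpr hv1
      rw [map_div₀, div_eq_div_iff hσv1 hv1]
      unfold conjDet at hdet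
      linear_combination -hdet
    obtain ⟨p, hp⟩ := exists_algebraMap_eq_of_map_eq_self hθ hspan hfixed
    refine ⟨v 1, ⟨!![1, 0; p, 1], by simp⟩, hv1, ?_⟩
    ext j
    fin_cases j <;> simp [hp, mul_div_cancel₀, hv1]

theorem exists_eq_vecMul_of_conjDet_eq (hθ : σ θ ≠ θ)
    (hspan : ∀ x : E, ∃ a b : F, x = algebraMap F E a + algebraMap F E b * θ)
    {v w : Fin 2 → E} (hw : conjDet σ w ≠ 0) (hvw : conjDet σ v = conjDet σ w) :
    ∃ h : SpecialLinearGroup (Fin 2) F,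
      v = w ᵥ* (h : Matrix (Fin 2) (Fin 2) F).map (algebraMap F E) := by
  obtain ⟨V, rfl⟩ := exists_eq_vecMul_map hspan v
  obtain ⟨W, rfl⟩ := exists_eq_vecMul_map hspan w
  simp only [conjDet_theta_one_vecMul_map] at hw hvw
  have hW : IsUnit W.det := by simpa using left_ne_zero_of_mul hw
  have hVW : V.det = W.det := (algebraMap F E).injective
    (mul_right_cancel₀ (sub_ne_zero.mpr hθ.symm) hvw)
  refine ⟨⟨W⁻¹ * V, by rw [det_mul, hVW, det_nonsing_inv, Ring.inverse_mul_cancel _ hW]⟩, ?_⟩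
  rw [vecMul_vecMul, ← Matrix.map_mul, mul_nonsing_inv_cancel_left _ _ hW]

theorem mem_doubleCoset_iff_exists_conjDet_eq (hθ : σ θ ≠ θ)
    (hspan : ∀ x : E, ∃ a b : F, x = algebraMap F E a + algebraMap F E b * θ)
    {g η : SpecialLinearGroup (Fin 2) E} :
    g ∈ doubleCoset F η ↔ ∃ t : E, t ≠ 0 ∧ conjDet σ (g 1) = t * σ t * conjDet σ (η 1) := by
  refine ⟨exists_conjDet_eq_of_mem_doubleCoset σ, fun ⟨t, ht, hgη⟩ => ?_⟩
  rw [mem_doubleCoset_iff_exists_row_eq]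
  by_cases hη : conjDet σ (η 1) = 0
  · rw [hη, mul_zero] at hgη
    obtain ⟨u, h, hu, hgrow⟩ :=
      exists_eq_smul_map_row_of_conjDet_eq_zero hθ hspan (g.row_ne_zero 1) hgη
    obtain ⟨w, k, hw, hηrow⟩ :=
      exists_eq_smul_map_row_of_conjDet_eq_zero hθ hspan (η.row_ne_zero 1) hη
    refine ⟨u / w, k⁻¹ * h, div_ne_zero hu hw, ?_⟩
    have hkh : (k : Matrix (Fin 2) (Fin 2) F) * (↑(k⁻¹ * h) : Matrix (Fin 2) (Fin 2) F) = h :=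
      congrArg Subtype.val (mul_inv_cancel_left k h)
    rw [hgrow, hηrow, smul_vecMul, ← mul_apply_eq_vecMul, ← Matrix.map_mul, hkh, smul_smul,
      div_mul_cancel₀ _ hw]
  · have hσt : σ t ≠ 0 := (map_ne_zero σ).mpr ht
    have hscaled : conjDet σ (t⁻¹ • g 1) = conjDet σ (η 1) := by
      rw [conjDet_smul, hgη, map_inv₀]
      field_simp
    obtain ⟨h, hh⟩ := exists_eq_vecMul_of_conjDet_eq hθ hspan hη hscaled
    exact ⟨t, h, ht, by rw [← hh, smul_inv_smul₀ ht]⟩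

end Quadratic

theorem stmt0_general {F E : Type*} [Field F] [Field E] [Algebra F E]
    (σ : E →ₐ[F] E) (θ : E) (hθ : σ θ ≠ θ)
    (hspan : ∀ x : E, ∃ a b : F, x = algebraMap F E a + algebraMap F E b * θ)
    (ε : F)
    (hεnotnorm : ¬ ∃ x : E, x * σ x = algebraMap F E ε)
    (hcover : ∀ a : F, a ≠ 0 →
      (∃ x : E, x * σ x = algebraMap F E a) ∨
      (∃ x : E, algebraMap F E ε * (x * σ x) = algebraMap F E a))
    (η₁ η₂ : SpecialLinearGroup (Fin 2) E)
    (hη₁ : (η₁ : Matrix (Fin 2) (Fin 2) E) = !![1, 0; θ, 1])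
    (hη₂ : (η₂ : Matrix (Fin 2) (Fin 2) E) = !![1, 0; algebraMap F E ε * θ, 1]) :
    (∀ g : SpecialLinearGroup (Fin 2) E,
        g ∈ doubleCoset F (1 : SpecialLinearGroup (Fin 2) E) ∪
          doubleCoset F η₁ ∪ doubleCoset F η₂) ∧
    doubleCoset F (1 : SpecialLinearGroup (Fin 2) E) ∩ doubleCoset F η₁ = ∅ ∧
    doubleCoset F (1 : SpecialLinearGroup (Fin 2) E) ∩ doubleCoset F η₂ = ∅ ∧
    doubleCoset F η₁ ∩ doubleCoset F η₂ = ∅ := by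
  have hδ : θ - σ θ ≠ 0 := sub_ne_zero.mpr hθ.symm
  have hε : algebraMap F E ε ≠ 0 := fun h => hεnotnorm ⟨0, by rw [h, zero_mul]⟩
  have h₀ : conjDet σ ((1 : SpecialLinearGroup (Fin 2) E) 1) = 0 := by simp [conjDet]
  have h₁ : conjDet σ (η₁ 1) = θ - σ θ := by
    simpa using conjDet_row_of_eq_lower (σ := σ) (θ := θ) (a := (1 : F)) (by simpa using hη₁)
  have h₂ : conjDet σ (η₂ 1) = algebraMap F E ε * (θ - σ θ) := conjDet_row_of_eq_lower hη₂
  refine ⟨fun g => ?_, doubleCoset_inter_eq_empty σ fun x => ?_,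
    doubleCoset_inter_eq_empty σ fun x => ?_, doubleCoset_inter_eq_empty σ fun x => ?_⟩
  · obtain ⟨V, hV⟩ := exists_eq_vecMul_map hspan (g 1)
    simp only [Set.mem_union, mem_doubleCoset_iff_exists_conjDet_eq hθ hspan, h₀, h₁, h₂]
    rw [hV, conjDet_theta_one_vecMul_map]
    by_cases hdet : V.det = 0
    · exact .inl (.inl ⟨1, one_ne_zero, by simp [hdet]⟩)
    have hdetE : algebraMap F E V.det ≠ 0 := (map_ne_zero _).mpr hdet
    rcases hcover _ hdet with ⟨x, hx⟩ | ⟨x, hx⟩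
    · exact .inl (.inr ⟨x, fun h => hdetE (by simp [← hx, h]), by rw [hx]⟩)
    · exact .inr ⟨x, fun h => hdetE (by simp [← hx, h]), by rw [← hx]; ring⟩
  · simpa only [h₀, h₁, mul_zero] using hδ
  · simpa only [h₀, h₂, mul_zero] using mul_ne_zero hε hδ
  · rw [h₁, h₂]
    exact fun h => hεnotnorm ⟨x, (mul_right_cancel₀ hδ h).symm⟩

/-- the double coset decomposition
`SL₂(E) = B(E)·SL₂(F) ⊔ B(E)·η₁·SL₂(F) ⊔ B(E)·η₂·SL₂(F)` for a quadratic
extension `E = F(√d)` with `[F^× : N_{E/F}(E^×)] = 2` and `ε` a non-norm. -/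
theorem stmt0 {F E : Type*} [Field F] [Field E] [Algebra F E]
    (hchar : (2 : F) ≠ 0)
    (σ : E ≃ₐ[F] E) (hσ2 : ∀ x : E, σ (σ x) = x)
    (hσne : σ ≠ AlgEquiv.refl)
    (hfix : ∀ x : E, σ x = x ↔ ∃ y : F, algebraMap F E y = x)
    (d : F) (hd : ¬ ∃ a : F, a ^ 2 = d)
    (sqrtd : E) (hsqrtd : sqrtd ^ 2 = algebraMap F E d)
    (hEgen : ∀ x : E, ∃ a b : F, x = algebraMap F E a + algebraMap F E b * sqrtd)
    (ε : F)
    (hεnotnorm : ¬ ∃ x : E, x * σ x = algebraMap F E ε)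
    (hcover : ∀ a : F, a ≠ 0 →
      (∃ x : E, x * σ x = algebraMap F E a) ∨
      (∃ x : E, algebraMap F E ε * (x * σ x) = algebraMap F E a))
    (η₁ η₂ : SpecialLinearGroup (Fin 2) E)
    (hη₁ : (η₁ : Matrix (Fin 2) (Fin 2) E) = !![1, 0; sqrtd, 1])
    (hη₂ : (η₂ : Matrix (Fin 2) (Fin 2) E) = !![1, 0; algebraMap F E ε * sqrtd, 1]) :
    (∀ g : SpecialLinearGroup (Fin 2) E,
        g ∈ doubleCoset F (1 : SpecialLinearGroup (Fin 2) E) ∪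
          doubleCoset F η₁ ∪ doubleCoset F η₂) ∧
    doubleCoset F (1 : SpecialLinearGroup (Fin 2) E) ∩ doubleCoset F η₁ = ∅ ∧
    doubleCoset F (1 : SpecialLinearGroup (Fin 2) E) ∩ doubleCoset F η₂ = ∅ ∧
    doubleCoset F η₁ ∩ doubleCoset F η₂ = ∅ := by
  refine stmt0_general (σ : E →ₐ[F] E) sqrtd (fun hfixed => ?_) hEgen ε hεnotnorm hcover
    η₁ η₂ hη₁ hη₂
  obtain ⟨y, hy⟩ := (hfix sqrtd).mp hfixed
  exact hd ⟨y, (algebraMap F E).injective (by rw [map_pow, hy, hsqrtd])⟩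
end

section
/- Let E/F be a quadratic Galois extension of fields with Galois group {1, σ} and norm map N_{E/F}(x) = x·σ(x). Let G₁ = {(g,λ) ∈ GL₂(E) × F× : λ²·N_{E/F}(det g) = 1}, a subgroup of GL₂(E) × F×, and let Z = {(t·I₂, N_{E/F}(t)⁻¹) : t ∈ E×}, a central subgroup of G₁. Let G₂ = {g ∈ GL₂(E) : det g ∈ F×}, which contains the scalar matrices F×·I₂ as a central subgroup. Then the map g ↦ (g, (det g)⁻¹) from G₂ to G₁ induces a group isomorphism G₂/(F×·I₂) ≅ G₁/Z. -/
open Matrix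

/-!
An element `(g, l)` with `l² N(det g) = 1` has `u = l det g` of norm one, and it comes from `G₂`
exactly when `u = 1`. By Hilbert 90, `u = σ(t) / t`; multiplying `g` by the scalar `t` turns `u`
into `N(t) ∈ Fˣ`, so `(g, l)` is congruent modulo `Z` to an element coming from `G₂`. If a scalar
`t` comes from `G₂` and lies in `Z`, then `t⁻² = N(t)⁻¹`, i.e. `σ(t) = t` and `t ∈ Fˣ`.
-/

theorem exists_ne_zero_map_eq_mul_of_mul_map_eq_one {R S : Type*} [CommRing R] [FunLike S R R]
    [RingHomClass S R R] {σ : S} (hσ : Function.Involutive σ) (hσne : ⇑σ ≠ id) {u : R}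
    (hu : u * σ u = 1) : ∃ t ≠ 0, σ t = u * t := by
  -- For every `x` the resolvent `x + u⁻¹ σ(x)` solves the equation, and `u⁻¹ = σ(u)`.
  obtain ⟨x, hx⟩ : ∃ x, x + σ u * σ x ≠ 0 := by
    by_contra! h
    have hu1 : σ u = -1 := eq_neg_of_add_eq_zero_right (by simpa using h 1)
    exact hσne <| funext fun x ↦ (add_neg_eq_zero.1 (by simpa [hu1] using h x)).symm
  refine ⟨x + σ u * σ x, hx, ?_⟩
  rw [map_add, map_mul, hσ u, hσ x]
  linear_combination -σ x * hu

theorem exists_monoidHom_comp_eq {A K L : Type*} [Group A] [Group K] [Group L] {f : K →* L}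
    (hf : Function.Injective f) {χ : A →* L} (hχ : χ.range ≤ f.range) :
    ∃ δ : A →* K, f.comp δ = χ :=
  ⟨(MonoidHom.ofInjective hf).symm.toMonoidHom.comp
    (χ.codRestrict f.range fun a ↦ hχ ⟨a, rfl⟩), by ext a; simp⟩

theorem coe_eq_smul_one_iff_eq_scalar {n R : Type*} [Fintype n] [DecidableEq n] [Semiring R]
    {g : GL n R} {t : Rˣ} :
    (g : Matrix n n R) = (t : R) • (1 : Matrix n n R) ↔ g = GeneralLinearGroup.scalar n t := by
  rw [Units.ext_iff, smul_one_eq_diagonal]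
  rfl

theorem exists_units_map_eq {R S : Type*} [Semiring R] [Semiring S] {f : R →+* S} [IsLocalHom f]
    {u : Sˣ} (hu : ∃ x, f x = u) : ∃ v : Rˣ, Units.map (f : R →* S) v = u := by
  obtain ⟨x, hx⟩ := hu
  have hunit : IsUnit x := isUnit_of_map_unit f x (hx ▸ u.isUnit)
  exact ⟨hunit.unit, Units.ext hx⟩

theorem algebraMap_sq_mul_mul_map {R A : Type*} [CommSemiring R] [CommSemiring A] [Algebra R A]
    (σ : A ≃ₐ[R] A) (l : R) (d : A) :
    algebraMap R A l ^ 2 * (d * σ d) = (algebraMap R A l * d) * σ (algebraMap R A l * d) := by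
  rw [map_mul, AlgEquiv.commutes]
  ring

section Multiplier

variable {F E G : Type*} [Field F] [Field E] [Algebra F E] [Group G] {σ : E ≃ₐ[F] E}
  {ν : G →* Eˣ} {ζ : Eˣ → G}

theorem exists_eq_and_mul_norm_eq_one_iff
    (hfix : ∀ x : E, σ x = x → ∃ y : F, algebraMap F E y = x) (hζ : ∀ t, ν (ζ t) = t ^ 2)
    {g : G} {l : F} (hl : algebraMap F E l * ν g = 1) :
    (∃ t : Eˣ, g = ζ t ∧ algebraMap F E l * (t * σ t) = 1) ↔
      ∃ c : Fˣ, g = ζ (Units.map (algebraMap F E : F →* E) c) := by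
  constructor
  · rintro ⟨t, rfl, ht⟩
    rw [hζ, Units.val_pow_eq_pow_val, sq] at hl
    have hσt : σ t = t := by
      have hlt : algebraMap F E l * (t * σ t) = algebraMap F E l * (t * t) := ht.trans hl.symm
      exact mul_left_cancel₀ t.ne_zero (mul_left_cancel₀ (left_ne_zero_of_mul_eq_one ht) hlt)
    obtain ⟨c, rfl⟩ := exists_units_map_eq (hfix t hσt)
    exact ⟨c, rfl⟩
  · rintro ⟨c, rfl⟩
    refine ⟨_, rfl, ?_⟩
    simpa [hζ, sq] using hl

theorem exists_algebraMap_eq_norm_and_mul_eq (hσ : Function.Involutive σ) (hσne : ⇑σ ≠ id)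
    (hfix : ∀ x : E, σ x = x → ∃ y : F, algebraMap F E y = x) (hζ : ∀ t, ν (ζ t) = t ^ 2)
    {g : G} {l : F} (hg : algebraMap F E l ^ 2 * (ν g * σ (ν g)) = 1) :
    ∃ (t : Eˣ) (n : Fˣ), algebraMap F E n = t * σ t ∧
      algebraMap F E l * ν (g * ζ t) = algebraMap F E n := by
  rw [algebraMap_sq_mul_mul_map] at hg
  obtain ⟨t, ht0, ht⟩ := exists_ne_zero_map_eq_mul_of_mul_map_eq_one hσ hσne hg
  lift t to Eˣ using ht0.isUnit
  have hfixed : σ (t * σ t) = t * σ t := by rw [map_mul, hσ, mul_comm]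
  obtain ⟨n, hn⟩ := exists_units_map_eq (u := t * Units.map (σ : E →* E) t) (hfix _ hfixed)
  have hn' : algebraMap F E n = t * σ t := congrArg Units.val hn
  refine ⟨t, n, hn', ?_⟩
  rw [hn', ht, map_mul, hζ]
  push_cast
  ring

theorem exists_hom_fst_eq_and_mul_eq_one {G₁ : Subgroup (G × Fˣ)} {G₂ : Subgroup G}
    (hgraph : ∀ p : G × Fˣ, algebraMap F E p.2 * ν p.1 = 1 → p ∈ G₁)
    (hG₂ : ∀ g ∈ G₂, ∃ c : F, (ν g : E) = algebraMap F E c) :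
    ∃ φ : G₂ →* G₁, ∀ g : G₂, (φ g : G × Fˣ).1 = g ∧
      algebraMap F E (φ g : G × Fˣ).2 * ν g = 1 := by
  have hrange : (ν.comp G₂.subtype).range ≤ (Units.map (algebraMap F E : F →* E)).range := by
    rintro _ ⟨g, rfl⟩
    obtain ⟨c, hc⟩ := hG₂ g g.2
    exact exists_units_map_eq ⟨c, hc.symm⟩
  obtain ⟨δ, hδ⟩ :=
    exists_monoidHom_comp_eq (Units.map_injective (algebraMap F E).injective) hrange
  have hδν (g : G₂) : algebraMap F E ((δ g)⁻¹ : Fˣ) * ν g = 1 := by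
    have hg : algebraMap F E (δ g) = ν g := congrArg Units.val (DFunLike.congr_fun hδ g)
    rw [← hg, ← map_mul, Units.inv_mul, map_one]
  exact ⟨(G₂.subtype.prod δ⁻¹).codRestrict G₁ fun g ↦ hgraph _ (hδν g), fun g ↦ ⟨rfl, hδν g⟩⟩

theorem eq_of_fst_eq_of_mul_eq_one {g : G} {p q : G × Fˣ} (hp : p.1 = g) (hq : q.1 = g)
    (hpν : algebraMap F E p.2 * ν g = 1) (hqν : algebraMap F E q.2 * ν g = 1) : p = q :=
  Prod.ext (hp.trans hq.symm) <| Units.ext <| (algebraMap F E).injective <|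
    mul_right_cancel₀ (ν g).ne_zero (hpν.trans hqν.symm)

/-- The multiplier `ν` plays the role of the determinant and `ζ` that of the scalar matrices;
the reduced norm on the units of a quaternion algebra is another example. -/
theorem stmt1_general (hσ : Function.Involutive σ) (hσne : ⇑σ ≠ id)
    (hfix : ∀ x : E, σ x = x → ∃ y : F, algebraMap F E y = x) (hζ : ∀ t, ν (ζ t) = t ^ 2)
    (G₁ : Subgroup (G × Fˣ))
    (hG₁ : ∀ p, p ∈ G₁ ↔ algebraMap F E p.2 ^ 2 * (ν p.1 * σ (ν p.1)) = 1)
    (Z : Subgroup (G × Fˣ))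
    (hZ : ∀ p, p ∈ Z ↔ ∃ t : Eˣ, p.1 = ζ t ∧ algebraMap F E p.2 * (t * σ t) = 1)
    (G₂ : Subgroup G) (hG₂ : ∀ g, g ∈ G₂ ↔ ∃ c : F, (ν g : E) = algebraMap F E c)
    (ZF : Subgroup G)
    (hZF : ∀ g, g ∈ ZF ↔ ∃ c : Fˣ, g = ζ (Units.map (algebraMap F E : F →* E) c))
    [(ZF.subgroupOf G₂).Normal] [(Z.subgroupOf G₁).Normal] :
    ∃ e : (G₂ ⧸ ZF.subgroupOf G₂) ≃* (G₁ ⧸ Z.subgroupOf G₁),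
      ∀ (g : G₂) (p : G₁), (p : G × Fˣ).1 = g → algebraMap F E (p : G × Fˣ).2 * ν g = 1 →
        e (QuotientGroup.mk g) = QuotientGroup.mk p := by
  have hgraph (p : G × Fˣ) (hp : algebraMap F E p.2 * ν p.1 = 1) : p ∈ G₁ := by
    rw [hG₁, algebraMap_sq_mul_mul_map, hp, map_one, mul_one]
  obtain ⟨φ, hφ⟩ := exists_hom_fst_eq_and_mul_eq_one hgraph fun g ↦ (hG₂ g).1
  let ψ : G₂ →* G₁ ⧸ Z.subgroupOf G₁ := (QuotientGroup.mk' _).comp φ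
  have hker : ZF.subgroupOf G₂ = ψ.ker := by
    ext g
    rw [← MonoidHom.comap_ker, QuotientGroup.ker_mk', Subgroup.mem_comap,
      Subgroup.mem_subgroupOf, Subgroup.mem_subgroupOf, hZ, hZF, (hφ g).1,
      exists_eq_and_mul_norm_eq_one_iff hfix hζ (hφ g).2]
  have hsurj : Function.Surjective ψ := by
    intro q
    obtain ⟨⟨⟨g, l⟩, hp⟩, rfl⟩ := QuotientGroup.mk_surjective q
    obtain ⟨t, n, hn, hgt⟩ :=
      exists_algebraMap_eq_norm_and_mul_eq hσ hσne hfix hζ ((hG₁ _).1 hp)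
    have hmem : g * ζ t ∈ G₂ := (hG₂ _).2 ⟨n / l, by
      rw [map_div₀, ← hgt, mul_div_cancel_left₀ _ (by simp)]⟩
    refine ⟨⟨g * ζ t, hmem⟩, (QuotientGroup.eq.2 ?_).symm⟩
    obtain ⟨hφ₁, hφ₂⟩ := hφ ⟨g * ζ t, hmem⟩
    rw [Subgroup.mem_subgroupOf, hZ]
    refine ⟨t, by simp [hφ₁], ?_⟩
    rw [← hn, ← hgt, ← hφ₂]
    simp only [Subgroup.coe_mul, InvMemClass.coe_inv, Prod.inv_mk, Prod.snd_mul, Units.val_mul,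
      Units.val_inv_eq_inv_val, map_mul, map_inv₀]
    field_simp
  refine ⟨QuotientGroup.liftEquiv _ hsurj hker, fun g p hp hpν ↦ ?_⟩
  have hpφ : φ g = p := Subtype.ext <| eq_of_fst_eq_of_mul_eq_one (hφ g).1 hp (hφ g).2 hpν
  rw [QuotientGroup.liftEquiv_mk, ← hpφ]
  rfl

end Multiplier

/-- for a quadratic Galois extension `E/F` with Galois group `{1, σ}`,
the map `g ↦ (g, (det g)⁻¹)` induces a group isomorphism
`{g ∈ GL₂(E) : det g ∈ F^×}/F^× ≅ G₁/Z`, where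
`G₁ = {(g,λ) ∈ GL₂(E) × F^× : λ²·N_{E/F}(det g) = 1}` and
`Z = {(t·I₂, N_{E/F}(t)⁻¹) : t ∈ E^×}`. -/
theorem stmt1 {F E : Type*} [Field F] [Field E] [Algebra F E]
    (σ : E ≃ₐ[F] E) (hσ2 : ∀ x : E, σ (σ x) = x)
    (hσne : σ ≠ AlgEquiv.refl)
    (hfix : ∀ x : E, σ x = x ↔ ∃ y : F, algebraMap F E y = x)
    (G₁ : Subgroup (GL (Fin 2) E × Fˣ))
    (hG₁ : ∀ p : GL (Fin 2) E × Fˣ, p ∈ G₁ ↔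
      (algebraMap F E (p.2 : F)) ^ 2 *
        ((p.1 : Matrix (Fin 2) (Fin 2) E).det * σ ((p.1 : Matrix (Fin 2) (Fin 2) E).det)) = 1)
    (Z : Subgroup (GL (Fin 2) E × Fˣ))
    (hZ : ∀ p : GL (Fin 2) E × Fˣ, p ∈ Z ↔ ∃ t : Eˣ,
      (p.1 : Matrix (Fin 2) (Fin 2) E) = (t : E) • (1 : Matrix (Fin 2) (Fin 2) E) ∧
      algebraMap F E (p.2 : F) * ((t : E) * σ (t : E)) = 1)
    (G₂ : Subgroup (GL (Fin 2) E))
    (hG₂ : ∀ g : GL (Fin 2) E, g ∈ G₂ ↔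
      ∃ c : F, (g : Matrix (Fin 2) (Fin 2) E).det = algebraMap F E c)
    (ZF : Subgroup (GL (Fin 2) E))
    (hZF : ∀ g : GL (Fin 2) E, g ∈ ZF ↔
      ∃ c : Fˣ, (g : Matrix (Fin 2) (Fin 2) E)
        = algebraMap F E (c : F) • (1 : Matrix (Fin 2) (Fin 2) E))
    [(ZF.subgroupOf G₂).Normal] [(Z.subgroupOf G₁).Normal] :
    ∃ e : (G₂ ⧸ ZF.subgroupOf G₂) ≃* (G₁ ⧸ Z.subgroupOf G₁),
      ∀ (g : G₂) (p : G₁),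
        (p : GL (Fin 2) E × Fˣ).1 = (g : GL (Fin 2) E) →
        algebraMap F E ((p : GL (Fin 2) E × Fˣ).2 : F) *
          ((g : GL (Fin 2) E) : Matrix (Fin 2) (Fin 2) E).det = 1 →
        e (QuotientGroup.mk g) = QuotientGroup.mk p :=
  stmt1_general (ν := GeneralLinearGroup.det) (ζ := GeneralLinearGroup.scalar (Fin 2)) hσ2
    (fun h ↦ hσne (DFunLike.coe_injective h)) (fun x ↦ (hfix x).1) GeneralLinearGroup.det_scalar
    G₁ hG₁ Z (by simpa only [coe_eq_smul_one_iff_eq_scalar] using hZ) G₂ hG₂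
    ZF fun g ↦ (hZF g).trans <| exists_congr fun c ↦
      coe_eq_smul_one_iff_eq_scalar (t := Units.map (algebraMap F E : F →* E) c)
end

section
/- Let F be a field of characteristic different from 2 and let u, ϖ ∈ F× be such that u, ϖ and uϖ are all non-squares in F×. Let E = F(√ϖ) and K = E(√u). Then the quadratic form q′ on K, viewed as a 4-dimensional F-vector space, defined by q′(k) = ½·tr_{E/F}(N_{K/E}(k)), is equivalent over F to the diagonal quadratic form ⟨1, ϖ, −u, −uϖ⟩; in particular, the determinant of the Gram matrix of q′ with respect to any F-basis of K is a square in F× (i.e., q′ has trivial discriminant). -/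
/-! In the basis `1, √ϖ, √u, √ϖ√u` of `K` over `F`, the norm of `y + z√u` is `y² - u z²` for
`y, z ∈ E`, and the trace form `½ tr_{E/F} (y²)` of `y = a + b√ϖ` is `a² + ϖ b²`. This diagonalizes
`q′`, and the product of its diagonal entries is `(uϖ)²`. It is a basis because `u` is not a square
in `E`: comparing coordinates in `u = (a + b√ϖ)²` gives `ab = 0`, so that `u` or `uϖ` would be a
square in `F`. -/

open Module
open QuadraticMap (associated polar weightedSumSquares)

section Discriminant

variable {R n M N : Type*} [CommRing R] [Invertible (2 : R)] [Fintype n] [DecidableEq n]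
  [AddCommGroup M] [Module R M] [AddCommGroup N] [Module R N]

theorem discr_eq_det_polar (b : Basis n R M) (Q : QuadraticForm R M) :
    Q.discr b = (Matrix.of fun i j => ⅟2 * polar Q (b i) (b j)).det := by
  rw [QuadraticForm.discr]
  congr with i j
  simp [QuadraticForm.toMatrix, LinearMap.toMatrix₂_apply, QuadraticMap.associated_apply, polar]

theorem associated_weightedSumSquares (w : n → R) :
    associated (weightedSumSquares R w) = Matrix.toLinearMap₂' R (Matrix.diagonal w) := by
  have hsymm (x y : n → R) : Matrix.toLinearMap₂' R (Matrix.diagonal w) x y =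
      Matrix.toLinearMap₂' R (Matrix.diagonal w) y x := by
    simp only [Matrix.toLinearMap₂'_apply', Matrix.mulVec_diagonal, dotProduct]
    exact Finset.sum_congr rfl fun i _ => by ring
  rw [← QuadraticMap.associated_left_inverse R hsymm]
  congr 1
  ext x
  simp only [Matrix.toLinearMap₂'_apply', Matrix.mulVec_diagonal, dotProduct,
    QuadraticMap.weightedSumSquares_apply, LinearMap.BilinMap.toQuadraticMap_apply, smul_eq_mul]
  exact Finset.sum_congr rfl fun i _ => by ring

theorem discr_weightedSumSquares (w : n → R) :
    QuadraticForm.discr (Pi.basisFun R n) (weightedSumSquares R w) = ∏ i, w i := by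
  rw [QuadraticForm.discr_eq_discr', QuadraticForm.discr', QuadraticForm.toMatrix',
    associated_weightedSumSquares, LinearMap.toMatrix'_toLinearMap₂', Matrix.det_diagonal]

theorem exists_isUnit_discr_eq_sq_mul_of_equivalent {Q₁ : QuadraticForm R M}
    {Q₂ : QuadraticForm R N} (h : Q₁.Equivalent Q₂) (b₁ : Basis n R M) (b₂ : Basis n R N) :
    ∃ c : R, IsUnit c ∧ Q₁.discr b₁ = c ^ 2 * Q₂.discr b₂ := by
  obtain ⟨e, he⟩ := h
  obtain rfl : Q₂.comp (e : M →ₗ[R] N) = Q₁ := QuadraticMap.ext he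
  exact ⟨_, e.isUnit_det b₁ b₂, by rw [QuadraticForm.discr_comp b₂, sq]⟩

end Discriminant

/-- `b` is the basis `(1, √d)` of a quadratic algebra `S = R(√d)`. -/
structure IsSqrtBasis {R S : Type*} [CommRing R] [CommRing S] [Algebra R S] (d : R)
    (b : Basis (Fin 2) R S) : Prop where
  apply_zero : b 0 = 1
  apply_one_sq : b 1 ^ 2 = algebraMap R S d

theorem exists_isSqrtBasis {k L : Type*} [Field k] [CommRing L] [Nontrivial L] [Algebra k L]
    {d : k} (hd : ¬IsSquare d) {s : L} (hs : s ^ 2 = algebraMap k L d)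
    (hgen : ∀ x : L, ∃ a b : k, x = algebraMap k L a + algebraMap k L b * s) :
    ∃ b : Basis (Fin 2) k L, IsSqrtBasis d b := by
  have hli : LinearIndependent k ![1, s] := by
    refine (LinearIndependent.pair_iff' one_ne_zero).2 fun a ha => hd ⟨a, ?_⟩
    apply (algebraMap k L).injective
    rw [← hs, ← ha, ← Algebra.algebraMap_eq_smul_one, sq, map_mul]
  have hspan : ⊤ ≤ Submodule.span k (Set.range ![1, s]) := by
    intro x _
    obtain ⟨a, b, rfl⟩ := hgen x
    rw [Matrix.range_cons_cons_empty, Submodule.mem_span_pair]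
    exact ⟨a, b, by simp only [Algebra.smul_def, mul_one]⟩
  exact ⟨Basis.mk hli hspan, by simp, by simpa using hs⟩

namespace IsSqrtBasis

variable {R S : Type*} [CommRing R] [CommRing S] [Algebra R S] {d : R} {b : Basis (Fin 2) R S}

theorem repr_algebraMap (h : IsSqrtBasis d b) (a : R) :
    b.repr (algebraMap R S a) = Finsupp.single 0 a := by
  rw [Algebra.algebraMap_eq_smul_one, ← h.apply_zero, map_smul, b.repr_self,
    Finsupp.smul_single_one]

theorem mul_eq (h : IsSqrtBasis d b) (x y : S) :
    x * y = (b.repr x 0 * b.repr y 0 + d * (b.repr x 1 * b.repr y 1)) • b 0 +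
      (b.repr x 0 * b.repr y 1 + b.repr x 1 * b.repr y 0) • b 1 := by
  conv_lhs => rw [← b.sum_repr x, ← b.sum_repr y]
  simp only [Fin.sum_univ_two, h.apply_zero, Algebra.smul_def, map_add, map_mul]
  linear_combination algebraMap R S (b.repr x 1) * algebraMap R S (b.repr y 1) * h.apply_one_sq

theorem repr_mul_zero (h : IsSqrtBasis d b) (x y : S) :
    b.repr (x * y) 0 = b.repr x 0 * b.repr y 0 + d * (b.repr x 1 * b.repr y 1) := by
  simp [h.mul_eq]

theorem repr_mul_one (h : IsSqrtBasis d b) (x y : S) :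
    b.repr (x * y) 1 = b.repr x 0 * b.repr y 1 + b.repr x 1 * b.repr y 0 := by
  simp [h.mul_eq]

theorem isSquare_or_isSquare_mul [NoZeroDivisors R] (h2 : (2 : R) ≠ 0) (h : IsSqrtBasis d b)
    {a : R} (ha : IsSquare (algebraMap R S a)) : IsSquare a ∨ IsSquare (a * d) := by
  obtain ⟨y, hy⟩ := ha
  have hrat : a = b.repr y 0 * b.repr y 0 + d * (b.repr y 1 * b.repr y 1) := by
    rw [← h.repr_mul_zero, ← hy, h.repr_algebraMap, Finsupp.single_eq_same]
  have hirr : 2 * (b.repr y 0 * b.repr y 1) = 0 := by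
    have hcoord := h.repr_mul_one y y
    rw [← hy, h.repr_algebraMap, Finsupp.single_eq_of_ne (by decide)] at hcoord
    linear_combination -hcoord
  rcases mul_eq_zero.1 ((mul_eq_zero.1 hirr).resolve_left h2) with h0 | h1
  · exact .inr ⟨d * b.repr y 1, by linear_combination d * hrat + d * b.repr y 0 * h0⟩
  · exact .inl ⟨b.repr y 0, by linear_combination hrat + d * b.repr y 1 * h1⟩

theorem leftMulMatrix_eq (h : IsSqrtBasis d b) (x : S) :
    Algebra.leftMulMatrix b x = !![b.repr x 0, d * b.repr x 1; b.repr x 1, b.repr x 0] := by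
  ext i j
  rw [Algebra.leftMulMatrix_eq_repr_mul]
  fin_cases i <;> fin_cases j <;> simp [h.repr_mul_zero, h.repr_mul_one]

theorem norm_eq (h : IsSqrtBasis d b) (x : S) :
    Algebra.norm R x = b.repr x 0 ^ 2 - d * b.repr x 1 ^ 2 := by
  rw [Algebra.norm_eq_matrix_det b, h.leftMulMatrix_eq, Matrix.det_fin_two_of]
  ring

theorem trace_eq (h : IsSqrtBasis d b) (x : S) : Algebra.trace R S x = 2 * b.repr x 0 := by
  rw [Algebra.trace_eq_matrix_trace b, h.leftMulMatrix_eq, Matrix.trace_fin_two_of, two_mul]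

end IsSqrtBasis

theorem exists_isSqrtBasis_tower {F E K : Type*} [Field F] [Field E] [CommRing K] [Nontrivial K]
    [Algebra F E] [Algebra E K] (h2 : (2 : F) ≠ 0) {u ϖ : F}
    (hu : ¬IsSquare u) (hϖ : ¬IsSquare ϖ) (huϖ : ¬IsSquare (u * ϖ))
    {sqrtϖ : E} (hsqrtϖ : sqrtϖ ^ 2 = algebraMap F E ϖ)
    (hEgen : ∀ x : E, ∃ a b : F, x = algebraMap F E a + algebraMap F E b * sqrtϖ)
    {sqrtu : K} (hsqrtu : sqrtu ^ 2 = algebraMap E K (algebraMap F E u))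
    (hKgen : ∀ x : K, ∃ a b : E, x = algebraMap E K a + algebraMap E K b * sqrtu) :
    ∃ (bE : Basis (Fin 2) F E) (bK : Basis (Fin 2) E K),
      IsSqrtBasis ϖ bE ∧ IsSqrtBasis (algebraMap F E u) bK := by
  obtain ⟨bE, hbE⟩ := exists_isSqrtBasis hϖ hsqrtϖ hEgen
  have huE : ¬IsSquare (algebraMap F E u) := fun h =>
    (hbE.isSquare_or_isSquare_mul h2 h).elim hu huϖ
  obtain ⟨bK, hbK⟩ := exists_isSqrtBasis huE hsqrtu hKgen
  exact ⟨bE, bK, hbE, hbK⟩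

section NormForm

variable {R S : Type*} [CommRing R] [CommRing S] [Algebra R S]

theorem norm_add_of_basis (b : Basis (Fin 2) R S) (x y : S) :
    Algebra.norm R (x + y) = Algebra.norm R x + Algebra.norm R y +
      (Algebra.trace R S x * Algebra.trace R S y - Algebra.trace R S (x * y)) := by
  simp only [Algebra.norm_eq_matrix_det b, Algebra.trace_eq_matrix_trace b, map_add, map_mul,
    Matrix.det_fin_two, Matrix.trace_fin_two, Matrix.mul_apply, Matrix.add_apply, Fin.sum_univ_two]
  ring

/-- The norm of a quadratic algebra `S/R`, as a quadratic form over `R`. The basis `b` only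
witnesses that `S` is free of rank two: the form does not depend on it. -/
noncomputable def normForm (b : Basis (Fin 2) R S) : QuadraticForm R S where
  toFun := Algebra.norm R
  toFun_smul a x := by
    rw [Algebra.smul_def, map_mul, Algebra.norm_algebraMap_of_basis b, Fintype.card_fin, sq,
      smul_eq_mul]
  exists_companion' :=
    ⟨(LinearMap.mul R R).compl₁₂ (Algebra.trace R S) (Algebra.trace R S) - Algebra.traceForm R S,
      norm_add_of_basis b⟩

end NormForm

section Tower

variable {R S T : Type*} [CommRing R] [CommRing S] [CommRing T] [Algebra R S] [Algebra S T]
  {u ϖ : R} {bS : Basis (Fin 2) R S} {bT : Basis (Fin 2) S T}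

theorem trace_norm_eq (hS : IsSqrtBasis ϖ bS) (hT : IsSqrtBasis (algebraMap R S u) bT) (x : T) :
    Algebra.trace R S (Algebra.norm S x) =
      2 * (bS.repr (bT.repr x 0) 0 ^ 2 + ϖ * bS.repr (bT.repr x 0) 1 ^ 2 -
        u * bS.repr (bT.repr x 1) 0 ^ 2 - u * ϖ * bS.repr (bT.repr x 1) 1 ^ 2) := by
  rw [hT.norm_eq, ← Algebra.smul_def, map_sub, map_smul, hS.trace_eq, hS.trace_eq, sq (bT.repr x 0),
    sq (bT.repr x 1), hS.repr_mul_zero, hS.repr_mul_zero, smul_eq_mul]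
  ring

variable [Invertible (2 : R)] [Algebra R T] [IsScalarTower R S T]

variable (R) in
/-- The form `q′ = ½ tr_{S/R} ∘ N_{T/S}` on a quadratic algebra `T` over `S`, viewed over `R`. -/
noncomputable def halfTraceNormForm (bT : Basis (Fin 2) S T) : QuadraticForm R T :=
  (⅟(2 : R) • Algebra.trace R S).compQuadraticMap' (normForm bT)

theorem halfTraceNormForm_apply (bT : Basis (Fin 2) S T) (x : T) :
    halfTraceNormForm R bT x = ⅟2 * Algebra.trace R S (Algebra.norm S x) :=
  rfl

theorem halfTraceNormForm_equivalent (hS : IsSqrtBasis ϖ bS)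
    (hT : IsSqrtBasis (algebraMap R S u) bT) :
    (halfTraceNormForm R bT).Equivalent (weightedSumSquares R ![1, ϖ, -u, -(u * ϖ)]) := by
  let b : Basis (Fin 4) R T := (bS.smulTower' bT).reindex finProdFinEquiv
  have hcoord (x : T) : b.equivFun x = ![bS.repr (bT.repr x 0) 0, bS.repr (bT.repr x 0) 1,
      bS.repr (bT.repr x 1) 0, bS.repr (bT.repr x 1) 1] := by
    ext i
    rw [Basis.equivFun_apply, Basis.repr_reindex_apply, Basis.smulTower'_repr]
    fin_cases i <;> rfl
  refine ⟨b.equivFun, fun x => ?_⟩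
  change weightedSumSquares R _ (b.equivFun x) = _
  rw [hcoord, halfTraceNormForm_apply, trace_norm_eq hS hT, invOf_mul_cancel_left']
  simp only [QuadraticMap.weightedSumSquares_apply, smul_eq_mul, Fin.sum_univ_four, Matrix.cons_val]
  ring

theorem exists_isUnit_discr_halfTraceNormForm_eq_sq (hu : IsUnit u) (hϖ : IsUnit ϖ)
    (hS : IsSqrtBasis ϖ bS) (hT : IsSqrtBasis (algebraMap R S u) bT) (b : Basis (Fin 4) R T) :
    ∃ c : R, IsUnit c ∧ (halfTraceNormForm R bT).discr b = c ^ 2 := by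
  obtain ⟨c, hc, hdiscr⟩ := exists_isUnit_discr_eq_sq_mul_of_equivalent
    (halfTraceNormForm_equivalent hS hT) b (Pi.basisFun R (Fin 4))
  have hprod : ∏ i, ![1, ϖ, -u, -(u * ϖ)] i = (u * ϖ) ^ 2 := by
    simp only [Fin.prod_univ_four, Matrix.cons_val]
    ring
  exact ⟨c * (u * ϖ), hc.mul (hu.mul hϖ), by
    rw [hdiscr, discr_weightedSumSquares, hprod, ← mul_pow]⟩

theorem stmt3_general (hu : IsUnit u) (hϖ : IsUnit ϖ) (hS : IsSqrtBasis ϖ bS)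
    (hT : IsSqrtBasis (algebraMap R S u) bT) (q : T → R)
    (hq : ∀ k : T, q k = ⅟2 * Algebra.trace R S (Algebra.norm S k)) :
    (∃ ℓ : (Fin 4 → R) ≃ₗ[R] T, ∀ v : Fin 4 → R,
        q (ℓ v) = 1 * v 0 ^ 2 + ϖ * v 1 ^ 2 + (-u) * v 2 ^ 2 + (-(u * ϖ)) * v 3 ^ 2) ∧
      ∀ b : Basis (Fin 4) R T, ∃ c : R, IsUnit c ∧
        (Matrix.of fun i j => ⅟2 * polar q (b i) (b j)).det = c ^ 2 := by
  obtain rfl : q = halfTraceNormForm R bT := funext hq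
  obtain ⟨e⟩ := halfTraceNormForm_equivalent hS hT
  refine ⟨⟨e.symm.toLinearEquiv, fun v => (e.symm.map_app v).trans ?_⟩, fun b => ?_⟩
  · simp [Fin.sum_univ_four, ← sq]
  · rw [← discr_eq_det_polar]
    exact exists_isUnit_discr_halfTraceNormForm_eq_sq hu hϖ hS hT b

end Tower

/-- for `E = F(√ϖ)` and `K = E(√u)` with `u, ϖ, uϖ` non-squares in `F`
(char F ≠ 2), the quadratic form `q′(k) = ½·tr_{E/F}(N_{K/E}(k))` on the
4-dimensional `F`-vector space `K` is equivalent to `⟨1, ϖ, −u, −uϖ⟩`; in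
particular its Gram determinant with respect to any `F`-basis is a nonzero
square, i.e. `q′` has trivial discriminant. -/
theorem stmt3 {F E K : Type*} [Field F] [Field E] [Field K]
    [Algebra F E] [Algebra E K] [Algebra F K] [IsScalarTower F E K]
    [FiniteDimensional F E] [FiniteDimensional E K]
    (hchar : (2 : F) ≠ 0)
    (u ϖ : F)
    (hu : ¬ ∃ a : F, a ^ 2 = u) (hϖ : ¬ ∃ a : F, a ^ 2 = ϖ)
    (huϖ : ¬ ∃ a : F, a ^ 2 = u * ϖ)
    (sqrtϖ : E) (hsqrtϖ : sqrtϖ ^ 2 = algebraMap F E ϖ)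
    (hEgen : ∀ x : E, ∃ a b : F, x = algebraMap F E a + algebraMap F E b * sqrtϖ)
    (sqrtu : K) (hsqrtu : sqrtu ^ 2 = algebraMap F K u)
    (hKgen : ∀ x : K, ∃ a b : E, x = algebraMap E K a + algebraMap E K b * sqrtu)
    (q : K → F)
    (hq : ∀ k : K, q k = 1 / 2 * Algebra.trace F E (Algebra.norm E k)) :
    (∃ ℓ : (Fin 4 → F) ≃ₗ[F] K, ∀ v : Fin 4 → F,
        q (ℓ v) = 1 * v 0 ^ 2 + ϖ * v 1 ^ 2 + (-u) * v 2 ^ 2 + (-(u * ϖ)) * v 3 ^ 2) ∧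
    (∀ b : Module.Basis (Fin 4) F K, ∃ c : F, c ≠ 0 ∧
        (Matrix.of fun i j : Fin 4 => (q (b i + b j) - q (b i) - q (b j)) / 2).det
          = c ^ 2) := by
  have hsq (a : F) : (∃ r, r ^ 2 = a) ↔ IsSquare a := by
    simp only [isSquare_iff_exists_sq, eq_comm]
  rw [hsq] at hu hϖ huϖ
  rw [IsScalarTower.algebraMap_apply F E K] at hsqrtu
  let _ : Invertible (2 : F) := invertibleOfNonzero hchar
  obtain ⟨bE, bK, hbE, hbK⟩ :=
    exists_isSqrtBasis_tower hchar hu hϖ huϖ hsqrtϖ hEgen hsqrtu hKgen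
  have hu0 : u ≠ 0 := by rintro rfl; exact hu .zero
  have hϖ0 : ϖ ≠ 0 := by rintro rfl; exact hϖ .zero
  simpa only [polar, invOf_eq_inv, isUnit_iff_ne_zero, div_eq_inv_mul] using
    stmt3_general hu0.isUnit hϖ0.isUnit hbE hbK q (by simpa only [one_div, invOf_eq_inv] using hq)
end

section
/- Let Γ be a group and let ρ: Γ → GL₂(ℂ) be a group homomorphism whose associated 2-dimensional representation is irreducible, i.e., no 1-dimensional subspace of ℂ² is invariant under ρ(γ) for all γ ∈ Γ. Let C be the subgroup of PGL₂(ℂ) = GL₂(ℂ)/(ℂ×·I₂) consisting of the classes [A] of matrices A ∈ GL₂(ℂ) such that A·ρ(γ)·A⁻¹ ∈ ℂ×·ρ(γ) for all γ ∈ Γ (the centralizer in PGL₂(ℂ) of the image of the projective representation attached to ρ). For such A, define χ_A: Γ → ℂ× by A·ρ(γ)·A⁻¹ = χ_A(γ)·ρ(γ). Then [A] ↦ χ_A is a well-defined group isomorphism from C onto the group I(ρ) = {χ: Γ → ℂ× a homomorphism : ρ⊗χ ≅ ρ}, and every χ ∈ I(ρ) satisfies χ² = 1. -/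
open Matrix

/-- The subgroup `ℂ^× · I₂` of nonzero scalar matrices inside `GL₂(ℂ)`. -/
def scalarSubgroup : Subgroup (GL (Fin 2) ℂ) :=
  (Units.map (algebraMap ℂ (Matrix (Fin 2) (Fin 2) ℂ)).toMonoidHom).range

instance : scalarSubgroup.Normal := by
  constructor
  intro x hx g
  obtain ⟨c, rfl⟩ := hx
  refine ⟨c, ?_⟩
  apply Units.ext
  simp only [Units.val_mul, Units.coe_map, RingHom.toMonoidHom_eq_coe,
    MonoidHom.coe_coe]
  rw [← Algebra.commutes, mul_assoc, Units.mul_inv, mul_one]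

/-- `PGL₂(ℂ) = GL₂(ℂ)/(ℂ^×·I₂)`. -/
abbrev PGL2C : Type := GL (Fin 2) ℂ ⧸ scalarSubgroup

/-!
The pairs `(A, χ)` with `A ρ A⁻¹ = χ • ρ` form a subgroup of `GL n K × Hom(Γ, Kˣ)`. Its projections
to `PGL n K` and to `Hom(Γ, Kˣ)` have images `C` and `I(ρ)`, and they have the same kernel: if `A`
is scalar then `χ = 1`, and if `χ = 1` then `A` commutes with `ρ`, hence is scalar by Schur's lemma.
So both images are the same quotient of the group of pairs. Taking determinants in
`A ρ(γ) A⁻¹ = χ(γ) • ρ(γ)` gives `χ(γ) ^ n = 1`.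
-/

section Irreducible

open Module

variable {Γ K V : Type*} [Monoid Γ] [Field K] [AddCommGroup V] [Module K V]

theorem isIrreducible_of_finrank_eq_two (ρ : Representation K Γ V) (hV : finrank K V = 2)
    (hρ : ¬ ∃ v : V, v ≠ 0 ∧ ∀ γ, ∃ c : K, ρ γ v = c • v) : ρ.IsIrreducible where
  exists_pair_ne := by
    have : Nontrivial V := nontrivial_of_finrank_eq_succ hV
    obtain ⟨v, hv⟩ := exists_ne (0 : V)
    refine ⟨⊥, ⊤, fun h => hv ?_⟩
    exact (h ▸ Submodule.mem_top : v ∈ (⊥ : Subrepresentation ρ))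
  eq_bot_or_eq_top W := by
    have : FiniteDimensional K V := .of_finrank_eq_succ hV
    have hdim : finrank K W.toSubmodule ≠ 1 := fun h => by
      obtain ⟨v, hv, hspan⟩ := finrank_eq_one_iff'.mp h
      refine hρ ⟨v, by simpa using hv, fun γ => ?_⟩
      obtain ⟨c, hc⟩ := hspan ⟨ρ γ v, W.apply_mem_toSubmodule γ v.2⟩
      exact ⟨c, congrArg Subtype.val hc.symm⟩
    have hle : finrank K W.toSubmodule ≤ 2 := hV ▸ W.toSubmodule.finrank_le
    obtain h | h : finrank K W.toSubmodule = 0 ∨ finrank K W.toSubmodule = 2 := by lia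
    · exact .inl (Subrepresentation.toSubmodule_injective (Submodule.finrank_eq_zero.mp h))
    · exact .inr (Subrepresentation.toSubmodule_injective
        (Submodule.eq_top_of_finrank_eq (h.trans hV.symm)))

theorem nontrivial_of_isIrreducible (ρ : Representation K Γ V) [ρ.IsIrreducible] :
    Nontrivial V := by
  have : Nontrivial (Submodule K V) :=
    Subrepresentation.toSubmodule_injective (ρ := ρ) |>.nontrivial
  exact (Submodule.nontrivial_iff K).mp this

theorem exists_eq_smul_id_of_commute [IsAlgClosed K] [FiniteDimensional K V]
    (ρ : Representation K Γ V) [ρ.IsIrreducible] {f : End K V} (hf : ∀ γ, Commute f (ρ γ)) :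
    ∃ c : K, f = c • LinearMap.id := by
  obtain ⟨c, hc⟩ :=
    (Representation.IsIrreducible.algebraMap_intertwiningMap_bijective_of_isAlgClosed
      (ρ := ρ)).surjective ⟨f, fun γ => (hf γ).eq⟩
  exact ⟨c, congrArg Representation.IntertwiningMap.toLinearMap hc.symm⟩

end Irreducible

theorem exists_map_mulEquiv_map {G H K : Type*} [Group G] [Group H] [Group K] (T : Subgroup G)
    (f : G →* H) (g : G →* K) (h : ∀ t ∈ T, f t = 1 ↔ g t = 1) :
    ∃ e : T.map f ≃* T.map g, ∀ t (ht : t ∈ T),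
      (e ⟨f t, Subgroup.mem_map_of_mem f ht⟩ : K) = g t := by
  have hker : (f.subgroupMap T).ker = (g.subgroupMap T).ker := by
    ext t
    simpa only [Subgroup.ker_subgroupMap, Subgroup.mem_subgroupOf, MonoidHom.mem_ker]
      using h t t.2
  let ef := QuotientGroup.quotientKerEquivOfSurjective _ (f.subgroupMap_surjective T)
  let eg := QuotientGroup.quotientKerEquivOfSurjective _ (g.subgroupMap_surjective T)
  refine ⟨ef.symm.trans ((QuotientGroup.quotientMulEquivOfEq hker).trans eg), fun t ht => ?_⟩
  have hef : ef.symm ⟨f t, Subgroup.mem_map_of_mem f ht⟩ = QuotientGroup.mk ⟨t, ht⟩ :=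
    ef.symm_apply_eq.mpr rfl
  simp only [MulEquiv.trans_apply, hef]
  rfl

theorem conj_coe_center {G : Type*} [Group G] (g : G) (z : Subgroup.center G) :
    MulAut.conj g (z : G) = z := by
  rw [MulAut.conj_apply, Subgroup.mem_center_iff.mp z.2, mul_inv_cancel_right]

section SelfTwists

variable {Γ S G : Type*} [Monoid Γ] [CommGroup S] [Group G]

/-- The self-twists of `ρ` by characters with values in the center of `G`, as the group of
pairs `(A, χ)` such that conjugation by `A` turns `ρ` into the twist `χ • ρ`, which is
`γ ↦ ι (χ γ) * ρ γ`. It is the graph of the correspondence `[A] ↦ χ_A`, before passing to the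
quotient by the center. -/
def selfTwists (ι : S →* Subgroup.center G) (ρ : Γ →* G) : Subgroup (G × (Γ →* S)) where
  carrier := {t | ∀ γ, MulAut.conj t.1 (ρ γ) = ι (t.2 γ) * ρ γ}
  one_mem' γ := by simp
  mul_mem' {s t} hs ht γ := by
    rw [Prod.fst_mul, map_mul, MulAut.mul_apply, ht γ, map_mul, hs γ, conj_coe_center,
      ← mul_assoc, ← Subgroup.coe_mul, ← map_mul, mul_comm (t.2 γ)]
    rfl
  inv_mem' {t} ht γ := by
    apply (MulAut.conj t.1).injective
    rw [Prod.fst_inv, map_inv, MulAut.apply_inv_self, map_mul, ht γ, conj_coe_center,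
      Prod.snd_inv, MonoidHom.inv_apply, map_inv, Subgroup.coe_inv, inv_mul_cancel_left]

/-- The image in `G ⧸ Subgroup.center G` of the elements `A` occurring in self-twists of `ρ`. When
`ι` is an isomorphism, this is the centralizer `C` of the projective homomorphism attached to
`ρ`. -/
def projectiveCentralizer (ι : S →* Subgroup.center G) (ρ : Γ →* G) :
    Subgroup (G ⧸ Subgroup.center G) :=
  (selfTwists ι ρ).map ((QuotientGroup.mk' _).comp (MonoidHom.fst G (Γ →* S)))

/-- The group `I(ρ)` of characters `χ` such that `χ • ρ` is conjugate to `ρ`. -/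
def selfTwistCharacters (ι : S →* Subgroup.center G) (ρ : Γ →* G) : Subgroup (Γ →* S) :=
  (selfTwists ι ρ).map (MonoidHom.snd G (Γ →* S))

variable {ι : S →* Subgroup.center G} {ρ : Γ →* G} {A : G} {χ ψ : Γ →* S}

theorem mem_selfTwists_iff :
    (A, χ) ∈ selfTwists ι ρ ↔ ∀ γ, A * ρ γ * A⁻¹ = ι (χ γ) * ρ γ :=
  .rfl

theorem mem_selfTwistCharacters_iff :
    χ ∈ selfTwistCharacters ι ρ ↔ ∃ A, (A, χ) ∈ selfTwists ι ρ := by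
  simp [selfTwistCharacters]

theorem exists_mem_selfTwists_iff (hι : Function.Injective ι) :
    (∃ χ, (A, χ) ∈ selfTwists ι ρ) ↔ ∀ γ, ∃ s, A * ρ γ * A⁻¹ = ι s * ρ γ := by
  refine ⟨fun ⟨χ, h⟩ γ => ⟨χ γ, h γ⟩, fun h => ?_⟩
  choose c hc using h
  have map_mul_c (γ δ : Γ) : c (γ * δ) = c γ * c δ := by
    apply hι
    apply Subtype.val_injective
    apply mul_right_cancel (b := ρ (γ * δ))
    calc (ι (c (γ * δ)) : G) * ρ (γ * δ) = (A * ρ γ * A⁻¹) * (A * ρ δ * A⁻¹) := by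
          rw [← hc, map_mul]; group
      _ = ι (c γ * c δ) * ρ (γ * δ) := by
          rw [hc, hc, mul_assoc, ← mul_assoc (ρ γ), Subgroup.mem_center_iff.mp (ι (c δ)).2,
            map_mul, map_mul, Subgroup.coe_mul]
          group
  have map_one_c : c 1 = 1 := by
    simpa using map_mul_c 1 1
  exact ⟨⟨⟨c, map_one_c⟩, map_mul_c⟩, hc⟩

theorem mem_projectiveCentralizer_iff (hι : Function.Injective ι)
    {x : G ⧸ Subgroup.center G} :
    x ∈ projectiveCentralizer ι ρ ↔
      ∃ A : G, (A : G ⧸ Subgroup.center G) = x ∧ ∀ γ, ∃ s, A * ρ γ * A⁻¹ = ι s * ρ γ := by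
  simp only [← exists_mem_selfTwists_iff hι, projectiveCentralizer, Subgroup.mem_map, Prod.exists,
    MonoidHom.comp_apply, MonoidHom.coe_fst, QuotientGroup.mk'_apply, exists_and_right, and_comm]

theorem mk_one_mem_selfTwists (hA : A ∈ Subgroup.center G) : (A, 1) ∈ selfTwists ι ρ :=
  mem_selfTwists_iff.mpr fun γ => by simp [← Subgroup.mem_center_iff.mp hA (ρ γ)]

theorem exists_mem_selfTwists_of_mk_mem
    (hA : (A : G ⧸ Subgroup.center G) ∈ projectiveCentralizer ι ρ) :
    ∃ χ, (A, χ) ∈ selfTwists ι ρ := by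
  obtain ⟨⟨B, χ⟩, hB, hBA⟩ := hA
  have hcenter : B⁻¹ * A ∈ Subgroup.center G := QuotientGroup.eq.mp hBA
  exact ⟨χ, by simpa using mul_mem hB (mk_one_mem_selfTwists hcenter)⟩

theorem character_eq_of_mem_selfTwists (hι : Function.Injective ι) (hχ : (A, χ) ∈ selfTwists ι ρ)
    (hψ : (A, ψ) ∈ selfTwists ι ρ) : χ = ψ :=
  MonoidHom.ext fun γ => hι (Subtype.ext (mul_right_cancel ((hχ γ).symm.trans (hψ γ))))

theorem mem_center_iff_of_mem_selfTwists (hι : Function.Injective ι)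
    (hρ : Subgroup.centralizer (Set.range ρ) ≤ Subgroup.center G)
    (h : (A, χ) ∈ selfTwists ι ρ) : A ∈ Subgroup.center G ↔ χ = 1 := by
  refine ⟨fun hA => character_eq_of_mem_selfTwists hι h (mk_one_mem_selfTwists hA), ?_⟩
  rintro rfl
  refine hρ (Subgroup.mem_centralizer_iff.mpr ?_)
  rintro _ ⟨γ, rfl⟩
  have hconj : A * ρ γ * A⁻¹ = ρ γ := by simpa using mem_selfTwists_iff.mp h γ
  exact (mul_inv_eq_iff_eq_mul.mp hconj).symm

theorem exists_projectiveCentralizer_mulEquiv (hι : Function.Injective ι)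
    (hρ : Subgroup.centralizer (Set.range ρ) ≤ Subgroup.center G) :
    ∃ e : projectiveCentralizer ι ρ ≃* selfTwistCharacters ι ρ,
      ∀ (A : G) (hA : (A : G ⧸ Subgroup.center G) ∈ projectiveCentralizer ι ρ),
        (A, (e ⟨A, hA⟩ : Γ →* S)) ∈ selfTwists ι ρ := by
  obtain ⟨e, he⟩ := exists_map_mulEquiv_map (selfTwists ι ρ)
    ((QuotientGroup.mk' (Subgroup.center G)).comp (MonoidHom.fst G (Γ →* S)))
    (MonoidHom.snd G (Γ →* S)) fun t ht =>
      (QuotientGroup.eq_one_iff t.1).trans (mem_center_iff_of_mem_selfTwists hι hρ ht)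
  refine ⟨e, fun A hA => ?_⟩
  obtain ⟨χ, hχ⟩ := exists_mem_selfTwists_of_mk_mem hA
  convert hχ
  exact he (A, χ) hχ

end SelfTwists

section GeneralLinear

variable {n R : Type*} [Fintype n] [DecidableEq n] [CommRing R]

/-- The scalar matrices, as a homomorphism to the center of `GL n R`: through it, characters with
values in `Rˣ` twist homomorphisms to `GL n R`. -/
def scalarCenter (n R : Type*) [Fintype n] [DecidableEq n] [CommRing R] :
    Rˣ →* Subgroup.center (GL n R) :=
  (GeneralLinearGroup.scalar n).codRestrict (Subgroup.center (GL n R)) fun c =>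
    GeneralLinearGroup.mem_center_iff_val_mem_range_scalar.mpr ⟨c, rfl⟩

theorem scalarCenter_injective [Nonempty n] : Function.Injective (scalarCenter n R) :=
  fun c d h => by
    have hval : Matrix.scalar n (c : R) = Matrix.scalar n (d : R) :=
      congrArg (fun z : Subgroup.center (GL n R) => (z : GL n R).val) h
    exact Units.ext (Matrix.scalar_inj.mp hval)

theorem coe_eq_smul_iff_eq_scalarCenter_mul {g h : GL n R} {c : Rˣ} :
    (g : Matrix n n R) = (c : R) • (h : Matrix n n R) ↔ g = scalarCenter n R c * h := by
  have hsmul : (c : R) • (h : Matrix n n R) = (scalarCenter n R c * h : GL n R) := by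
    simp [scalarCenter, Matrix.smul_eq_diagonal_mul]
  rw [hsmul, Units.val_inj]

theorem pow_card_eq_one_of_conj_eq_scalarCenter_mul {A g : GL n R} {c : Rˣ}
    (h : A * g * A⁻¹ = scalarCenter n R c * g) : c ^ Fintype.card n = 1 := by
  have hdet := congrArg GeneralLinearGroup.det h
  rw [map_mul, map_mul, map_inv, mul_inv_cancel_comm, map_mul] at hdet
  exact (GeneralLinearGroup.det_scalar c).symm.trans (right_eq_mul.mp hdet)

variable {Γ : Type*} [Monoid Γ]

/-- The representation on column vectors given by a homomorphism to `GL n R`, so that its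
irreducibility can be expressed by `Representation.IsIrreducible`. -/
def matrixRepresentation (ρ : Γ →* GL n R) : Representation R Γ (n → R) :=
  (Matrix.toLinAlgEquiv' : Matrix n n R ≃ₐ[R] _).toMonoidHom.comp ((Units.coeHom _).comp ρ)

variable {K : Type*} [Field K]

theorem centralizer_le_center_of_isIrreducible [IsAlgClosed K] (ρ : Γ →* GL n K)
    [(matrixRepresentation ρ).IsIrreducible] :
    Subgroup.centralizer (Set.range ρ) ≤ Subgroup.center (GL n K) := by
  intro A hA
  have hcomm (γ : Γ) : Commute (Matrix.toLinAlgEquiv' A.val) (matrixRepresentation ρ γ) :=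
    Commute.map (congrArg Units.val (Subgroup.mem_centralizer_iff.mp hA _ ⟨γ, rfl⟩)).symm
      (Matrix.toLinAlgEquiv' : Matrix n n K ≃ₐ[K] _)
  obtain ⟨c, hc⟩ := exists_eq_smul_id_of_commute _ hcomm
  rw [GeneralLinearGroup.mem_center_iff_val_mem_range_scalar]
  refine ⟨c, Matrix.toLinAlgEquiv'.injective (hc ▸ ?_)⟩
  ext
  simp [Pi.single_apply]

theorem stmt8_general [IsAlgClosed K] (ρ : Γ →* GL n K)
    [(matrixRepresentation ρ).IsIrreducible]
    (Z : Subgroup (GL n K)) [Z.Normal] (hZ : Z = Subgroup.center (GL n K))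
    (C : Subgroup (GL n K ⧸ Z))
    (hC : ∀ x : GL n K ⧸ Z, x ∈ C ↔ ∃ A : GL n K, (A : GL n K ⧸ Z) = x ∧ ∀ γ, ∃ c : Kˣ,
      ((A * ρ γ * A⁻¹ : GL n K) : Matrix n n K) = (c : K) • (ρ γ : Matrix n n K))
    (I : Subgroup (Γ →* Kˣ))
    (hI : ∀ χ : Γ →* Kˣ, χ ∈ I ↔ ∃ A : GL n K, ∀ γ,
      ((A * ρ γ * A⁻¹ : GL n K) : Matrix n n K) = (χ γ : K) • (ρ γ : Matrix n n K)) :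
    (∃ e : C ≃* I, ∀ (A : GL n K) (hA : (A : GL n K ⧸ Z) ∈ C) (γ : Γ),
      ((A * ρ γ * A⁻¹ : GL n K) : Matrix n n K) =
        ((e ⟨A, hA⟩ : Γ →* Kˣ) γ : K) • (ρ γ : Matrix n n K)) ∧
    ∀ χ ∈ I, ∀ γ, χ γ ^ Fintype.card n = 1 := by
  subst hZ
  have : Nontrivial (n → K) := nontrivial_of_isIrreducible (matrixRepresentation ρ)
  have : Nonempty n := not_isEmpty_iff.mp fun _ => not_subsingleton (n → K) inferInstance
  simp only [coe_eq_smul_iff_eq_scalarCenter_mul] at hC hI ⊢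
  obtain rfl : C = projectiveCentralizer (scalarCenter n K) ρ := by
    ext x
    rw [hC, mem_projectiveCentralizer_iff scalarCenter_injective]
  obtain rfl : I = selfTwistCharacters (scalarCenter n K) ρ := by
    ext χ
    simp only [hI, mem_selfTwistCharacters_iff, mem_selfTwists_iff]
  refine ⟨exists_projectiveCentralizer_mulEquiv scalarCenter_injective
    (centralizer_le_center_of_isIrreducible ρ), fun χ hχ γ => ?_⟩
  obtain ⟨A, hA⟩ := (hI χ).mp hχ
  exact pow_card_eq_one_of_conj_eq_scalarCenter_mul (hA γ)

end GeneralLinear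

theorem scalarSubgroup_eq_center : scalarSubgroup = Subgroup.center (GL (Fin 2) ℂ) :=
  GeneralLinearGroup.center_eq_range_scalar.symm

/-- for an irreducible 2-dimensional representation `ρ : Γ → GL₂(ℂ)`,
the map `[A] ↦ χ_A` (where `A ρ(γ) A⁻¹ = χ_A(γ) ρ(γ)`) is a well-defined group
isomorphism from the centralizer `C ⊆ PGL₂(ℂ)` of the projective image of `ρ`
onto `I(ρ) = {χ : Γ → ℂ^× : ρ ⊗ χ ≅ ρ}`, and every `χ ∈ I(ρ)` satisfies `χ² = 1`. -/
theorem stmt8 {Γ : Type*} [Group Γ] (ρ : Γ →* GL (Fin 2) ℂ)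
    (hirr : ¬ ∃ v : Fin 2 → ℂ, v ≠ 0 ∧ ∀ γ : Γ, ∃ c : ℂ,
      ((ρ γ : GL (Fin 2) ℂ) : Matrix (Fin 2) (Fin 2) ℂ).mulVec v = c • v)
    (C : Subgroup PGL2C)
    (hC : ∀ x : PGL2C, x ∈ C ↔ ∃ A : GL (Fin 2) ℂ,
      (QuotientGroup.mk A : PGL2C) = x ∧ ∀ γ : Γ, ∃ c : ℂˣ,
        ((A * ρ γ * A⁻¹ : GL (Fin 2) ℂ) : Matrix (Fin 2) (Fin 2) ℂ)
          = (c : ℂ) • ((ρ γ : GL (Fin 2) ℂ) : Matrix (Fin 2) (Fin 2) ℂ))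
    (I : Subgroup (Γ →* ℂˣ))
    (hI : ∀ χ : Γ →* ℂˣ, χ ∈ I ↔ ∃ A : GL (Fin 2) ℂ, ∀ γ : Γ,
      ((A * ρ γ * A⁻¹ : GL (Fin 2) ℂ) : Matrix (Fin 2) (Fin 2) ℂ)
        = (χ γ : ℂ) • ((ρ γ : GL (Fin 2) ℂ) : Matrix (Fin 2) (Fin 2) ℂ)) :
    (∃ e : C ≃* I,
      ∀ (A : GL (Fin 2) ℂ) (hA : (QuotientGroup.mk A : PGL2C) ∈ C) (γ : Γ),
        ((A * ρ γ * A⁻¹ : GL (Fin 2) ℂ) : Matrix (Fin 2) (Fin 2) ℂ)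
          = ((((e ⟨QuotientGroup.mk A, hA⟩ : I) : Γ →* ℂˣ) γ : ℂ)) •
            ((ρ γ : GL (Fin 2) ℂ) : Matrix (Fin 2) (Fin 2) ℂ)) ∧
    (∀ χ ∈ I, ∀ γ : Γ, χ γ * χ γ = 1) := by
  have := isIrreducible_of_finrank_eq_two (matrixRepresentation ρ) (by simp) hirr
  simpa only [Fintype.card_fin, pow_two] using
    stmt8_general ρ scalarSubgroup scalarSubgroup_eq_center C hC I hI
end
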